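/- Let G be a reachability game and let φ ⊆ S with Goal ⊆ φ. Suppose φ perfectly partitions G, i.e., there is no transition (s, s') ∈ E with s ∈ φ, s' ∉ φ and s ∉ Goal. Let G_post be the reachability game obtained from G by keeping the same state set, partition and goal set Goal, and restricting both transition relations to sources in φ. Then for every state s ∈ Post(Instantiate(φ, G)) (where Instantiate(φ, G) = {(s, s') ∈ E | s ∉ φ and s' ∈ φ}): REACH wins from s in G_post if and only if REACH wins from s in G. -/

import Mathlib

universe u

/-- A reachability game over a state type `S`. States with `isReach s` are
controlled by player REACH, the others by player SAFE. -/
structure Game (S : Type u) where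
  isReach : S → Prop
  Safe : S → S → Prop
  Reach : S → S → Prop
  Init : Set S
  Goal : Set S
  safe_src : ∀ s s', Safe s s' → ¬ isReach s
  reach_src : ∀ s s', Reach s s' → isReach s

namespace Game

variable {S : Type u}

/-- The edge relation `E = Safe ∪ Reach`. -/
def E (G : Game S) (s s' : S) : Prop := G.Safe s s' ∨ G.Reach s s'

/-- A trap state has no outgoing `E`-transition. -/
def Trap (G : Game S) (s : S) : Prop := ∀ s', ¬ G.E s s'

/-- A play: an `E`-path which is infinite (`len = ⊤`) or finite
(`len = n`) and then ends in a trap state. Values of `seq` beyond a finite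
length are irrelevant. -/
structure Play (G : Game S) where
  seq : ℕ → S
  len : ℕ∞
  step : ∀ i : ℕ, (i : ℕ∞) < len → G.E (seq i) (seq (i + 1))
  fin_trap : ∀ n : ℕ, len = (n : ℕ∞) → G.Trap (seq n)

/-- REACH wins a play if some state of the play is a goal state. -/
def ReachWinsPlay (G : Game S) (p : G.Play) : Prop :=
  ∃ k : ℕ, (k : ℕ∞) ≤ p.len ∧ p.seq k ∈ G.Goal

/-- SAFE wins a play iff REACH does not. -/
def SafeWinsPlay (G : Game S) (p : G.Play) : Prop := ¬ G.ReachWinsPlay p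

/-- The list `[f 0, …, f (n-1)]`. -/
def listPrefix (f : ℕ → S) (n : ℕ) : List S := (List.range n).map f

/-- A reachability strategy: on any nonempty sequence ending in a non-trap
REACH state it chooses a `Reach`-successor. -/
def IsReachStrategy (G : Game S) (σ : List S → S) : Prop :=
  ∀ (ω : List S) (s : S), G.isReach s → ¬ G.Trap s → G.Reach s (σ (ω ++ [s]))

/-- A safety strategy: on any nonempty sequence ending in a non-trap SAFE
state it chooses a `Safe`-successor. -/
def IsSafeStrategy (G : Game S) (σ : List S → S) : Prop :=
  ∀ (ω : List S) (s : S), ¬ G.isReach s → ¬ G.Trap s → G.Safe s (σ (ω ++ [s]))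

/-- Consistency of a play with a reachability strategy. -/
def ConsistentR (G : Game S) (σ : List S → S) (p : G.Play) : Prop :=
  ∀ i : ℕ, (i : ℕ∞) < p.len → G.isReach (p.seq i) →
    p.seq (i + 1) = σ (listPrefix p.seq (i + 1))

/-- Consistency of a play with a safety strategy. -/
def ConsistentS (G : Game S) (σ : List S → S) (p : G.Play) : Prop :=
  ∀ i : ℕ, (i : ℕ∞) < p.len → ¬ G.isReach (p.seq i) →
    p.seq (i + 1) = σ (listPrefix p.seq (i + 1))

/-- `σ` is a reachability strategy winning from `s`. -/
def WinningReachStrategyFrom (G : Game S) (σ : List S → S) (s : S) : Prop :=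
  G.IsReachStrategy σ ∧
    ∀ p : G.Play, p.seq 0 = s → G.ConsistentR σ p → G.ReachWinsPlay p

/-- `σ` is a safety strategy winning from `s`. -/
def WinningSafeStrategyFrom (G : Game S) (σ : List S → S) (s : S) : Prop :=
  G.IsSafeStrategy σ ∧
    ∀ p : G.Play, p.seq 0 = s → G.ConsistentS σ p → G.SafeWinsPlay p

/-- REACH wins from `s`. -/
def ReachWinsFrom (G : Game S) (s : S) : Prop :=
  ∃ σ : List S → S, G.WinningReachStrategyFrom σ s

/-- SAFE wins from `s`. -/
def SafeWinsFrom (G : Game S) (s : S) : Prop :=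
  ∃ σ : List S → S, G.WinningSafeStrategyFrom σ s

/-- Sources of a transition predicate. -/
def Pre (T : S → S → Prop) : Set S := {s | ∃ s', T s s'}

/-- Targets of a transition predicate. -/
def Post (T : S → S → Prop) : Set S := {s' | ∃ s, T s s'}

/-- Enforceable transitions of `T` in `G`. -/
def Enf (G : Game S) (T : S → S → Prop) (s s' : S) : Prop :=
  G.E s s' ∧ T s s' ∧ ∀ s'', G.Safe s s'' → T s s''

/-- `C` is a necessary subgoal: every play of `G` (from `Init`) reaching
`Goal` at index `n` crosses `C` at some index `k < n`. -/
def NecessarySubgoal (G : Game S) (C : S → S → Prop) : Prop :=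
  ∀ p : G.Play, p.seq 0 ∈ G.Init →
    ∀ n : ℕ, (n : ℕ∞) ≤ p.len → p.seq n ∈ G.Goal →
      ∃ k < n, C (p.seq k) (p.seq (k + 1))

/-- `ρ 0 … ρ n` is a play prefix: an `E`-path avoiding `Goal` whose last
state is not a trap state. -/
def IsPlayPrefix (G : Game S) (ρ : ℕ → S) (n : ℕ) : Prop :=
  (∀ i < n, G.E (ρ i) (ρ (i + 1))) ∧ (∀ j ≤ n, ρ j ∉ G.Goal) ∧ ¬ G.Trap (ρ n)

/-- Conformance of a play prefix with a symbolic reachability strategy. -/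
def PrefixConformsR (G : Game S) (𝔖 : S → S → Prop) (ρ : ℕ → S) (n : ℕ) : Prop :=
  ∀ j < n, G.isReach (ρ j) → 𝔖 (ρ j) (ρ (j + 1))

/-- Conformance of a play prefix with a symbolic safety strategy. -/
def PrefixConformsS (G : Game S) (𝔖 : S → S → Prop) (ρ : ℕ → S) (n : ℕ) : Prop :=
  ∀ j < n, ¬ G.isReach (ρ j) → 𝔖 (ρ j) (ρ (j + 1))

/-- A play conforms to a symbolic reachability strategy if all its play
prefixes do. -/
def PlayConformsR (G : Game S) (𝔖 : S → S → Prop) (p : G.Play) : Prop :=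
  ∀ n : ℕ, (n : ℕ∞) ≤ p.len → G.IsPlayPrefix p.seq n → G.PrefixConformsR 𝔖 p.seq n

/-- A play conforms to a symbolic safety strategy if all its play
prefixes do. -/
def PlayConformsS (G : Game S) (𝔖 : S → S → Prop) (p : G.Play) : Prop :=
  ∀ n : ℕ, (n : ℕ∞) ≤ p.len → G.IsPlayPrefix p.seq n → G.PrefixConformsS 𝔖 p.seq n

/-- `𝔖` is a winning symbolic reachability strategy from `s`. -/
def WinningSymbolicReachFrom (G : Game S) (𝔖 : S → S → Prop) (s : S) : Prop :=
  (∀ a b, 𝔖 a b → G.E a b) ∧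
  (∀ p : G.Play, p.seq 0 = s → G.PlayConformsR 𝔖 p → G.ReachWinsPlay p) ∧
  (∀ (ρ : ℕ → S) (n : ℕ), ρ 0 = s → G.IsPlayPrefix ρ n → G.PrefixConformsR 𝔖 ρ n →
      G.isReach (ρ n) → ∃ s', 𝔖 (ρ n) s' ∧ G.Reach (ρ n) s')

/-- `𝔖` is a winning symbolic safety strategy from `s`. -/
def WinningSymbolicSafeFrom (G : Game S) (𝔖 : S → S → Prop) (s : S) : Prop :=
  (∀ a b, 𝔖 a b → G.E a b) ∧
  (∀ p : G.Play, p.seq 0 = s → G.PlayConformsS 𝔖 p → G.SafeWinsPlay p) ∧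
  (∀ (ρ : ℕ → S) (n : ℕ), ρ 0 = s → G.IsPlayPrefix ρ n → G.PrefixConformsS 𝔖 ρ n →
      ¬ G.isReach (ρ n) → ∃ s', 𝔖 (ρ n) s' ∧ G.Safe (ρ n) s')

/-- Bisimulations on `G`. -/
def IsBisimulation (G : Game S) (R : S → S → Prop) : Prop :=
  ∀ s1 s2, R s1 s2 →
    ((s1 ∈ G.Goal ↔ s2 ∈ G.Goal) ∧ (s1 ∈ G.Init ↔ s2 ∈ G.Init) ∧
      (G.isReach s1 ↔ G.isReach s2)) ∧
    (∀ s1', G.E s1 s1' → ∃ s2', G.E s2 s2' ∧ R s1' s2') ∧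
    (∀ s2', G.E s2 s2' → ∃ s1', G.E s1 s1' ∧ R s1' s2')

/-- The pre-game `⟨Init, Safe ∖ F, Reach ∖ F, Pre(Enf(F, G))⟩`. -/
def preGame (G : Game S) (F : S → S → Prop) : Game S where
  isReach := G.isReach
  Safe := fun a b => G.Safe a b ∧ ¬ F a b
  Reach := fun a b => G.Reach a b ∧ ¬ F a b
  Init := G.Init
  Goal := Pre (G.Enf F)
  safe_src := fun a b h => G.safe_src a b h.1
  reach_src := fun a b h => G.reach_src a b h.1

/-- The post-game: transitions restricted to sources in `φ`. -/
def postGame (G : Game S) (φ : Set S) : Game S where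
  isReach := G.isReach
  Safe := fun a b => G.Safe a b ∧ a ∈ φ
  Reach := fun a b => G.Reach a b ∧ a ∈ φ
  Init := G.Init
  Goal := G.Goal
  safe_src := fun a b h => G.safe_src a b h.1
  reach_src := fun a b h => G.reach_src a b h.1

end Game

/-!
Whether REACH wins from a state of `φ` depends only on the part of the game with sources in `φ`.
A play that starts in `φ` and avoids the goal never leaves a perfect partition, so two games that
agree on `φ` have the same plays from states of `φ` that REACH loses, and a winning strategy for
one wins in the other once its moves outside `φ` are replaced by arbitrary legal ones. The post-game
agrees with the original game on `φ`.
-/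

namespace Game

variable {S : Type u} {G H : Game S} {φ : Set S} {s : S}

theorem listPrefix_succ (f : ℕ → S) (n : ℕ) :
    listPrefix f (n + 1) = listPrefix f n ++ [f n] := by
  simp [listPrefix, List.range_succ]

theorem exists_reach_of_not_trap (hs : G.isReach s) (htrap : ¬ G.Trap s) : ∃ t, G.Reach s t := by
  simp only [Trap, not_forall, not_not] at htrap
  obtain ⟨t, hst⟩ := htrap
  exact ⟨t, hst.resolve_left fun hsafe => G.safe_src s t hsafe hs⟩

theorem exists_isReachStrategy_eq_on (σ : List S → S)
    (hσ : ∀ (ω : List S), ∀ s ∈ φ, G.isReach s → ¬ G.Trap s → G.Reach s (σ (ω ++ [s]))) :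
    ∃ τ, G.IsReachStrategy τ ∧ ∀ (ω : List S), ∀ s ∈ φ, τ (ω ++ [s]) = σ (ω ++ [s]) := by
  classical
  have : Nonempty S := ⟨σ []⟩
  choose! succ hsucc using fun s => exists_reach_of_not_trap (G := G) (s := s)
  let τ (l : List S) : S := l.getLast?.elim (σ l) fun s => if s ∈ φ then σ l else succ s
  have hτ (ω : List S) (s : S) : τ (ω ++ [s]) = if s ∈ φ then σ (ω ++ [s]) else succ s := by
    simp [τ]
  refine ⟨τ, fun ω s hs htrap => ?_, fun ω s hsφ => by rw [hτ, if_pos hsφ]⟩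
  rw [hτ]
  split_ifs with hsφ
  · exact hσ ω s hsφ hs htrap
  · exact hsucc s hs htrap

/-- `φ` perfectly partitions `G`: a transition can leave `φ` only from a goal state. -/
def IsPerfectPartition (G : Game S) (φ : Set S) : Prop :=
  ∀ s s', G.E s s' → s ∈ φ → s' ∉ φ → s ∈ G.Goal

theorem IsPerfectPartition.seq_mem (hφ : G.IsPerfectPartition φ) {p : G.Play}
    (h0 : p.seq 0 ∈ φ) (hlose : ¬ G.ReachWinsPlay p) (k : ℕ) (hk : (k : ℕ∞) ≤ p.len) :
    p.seq k ∈ φ := by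
  induction k with
  | zero => exact h0
  | succ k ih =>
    have hlt : (k : ℕ∞) < p.len := lt_of_lt_of_le (by exact_mod_cast k.lt_succ_self) hk
    by_contra hleave
    exact hlose ⟨k, hlt.le, hφ _ _ (p.step k hlt) (ih hlt.le) hleave⟩

/-- `G` and `H` agree on `φ`: the states of `φ` have the same owner, the same outgoing transitions
(possibly leaving `φ`) and the same goal status in both games. Initial states are ignored, since
winning from a given state does not depend on them. -/
structure AgreeOn (G H : Game S) (φ : Set S) : Prop where
  isReach_iff : ∀ s ∈ φ, (G.isReach s ↔ H.isReach s)
  safe_iff : ∀ s ∈ φ, ∀ t, (G.Safe s t ↔ H.Safe s t)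
  reach_iff : ∀ s ∈ φ, ∀ t, (G.Reach s t ↔ H.Reach s t)
  mem_goal_iff : ∀ s ∈ φ, (s ∈ G.Goal ↔ s ∈ H.Goal)

namespace AgreeOn

theorem symm (h : G.AgreeOn H φ) : H.AgreeOn G φ where
  isReach_iff s hs := (h.isReach_iff s hs).symm
  safe_iff s hs t := (h.safe_iff s hs t).symm
  reach_iff s hs t := (h.reach_iff s hs t).symm
  mem_goal_iff s hs := (h.mem_goal_iff s hs).symm

theorem e_iff (h : G.AgreeOn H φ) (hs : s ∈ φ) (t : S) : G.E s t ↔ H.E s t :=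
  or_congr (h.safe_iff s hs t) (h.reach_iff s hs t)

theorem trap_iff (h : G.AgreeOn H φ) (hs : s ∈ φ) : G.Trap s ↔ H.Trap s :=
  forall_congr' fun t => not_congr (h.e_iff hs t)

theorem isPerfectPartition_iff (h : G.AgreeOn H φ) :
    G.IsPerfectPartition φ ↔ H.IsPerfectPartition φ := by
  refine forall₂_congr fun s t => ?_
  by_cases hs : s ∈ φ
  · rw [h.e_iff hs, h.mem_goal_iff s hs]
  · simp [hs]

/-- A play of `G` that stays in `φ`, regarded as a play of a game `H` that agrees with `G` on
`φ`. -/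
def mapPlay (h : G.AgreeOn H φ) (p : G.Play) (hp : ∀ k : ℕ, (k : ℕ∞) ≤ p.len → p.seq k ∈ φ) :
    H.Play where
  seq := p.seq
  len := p.len
  step i hi := (h.e_iff (hp i hi.le) _).1 (p.step i hi)
  fin_trap n hn := (h.trap_iff (hp n hn.ge)).1 (p.fin_trap n hn)

theorem exists_isReachStrategy_eq_on (h : G.AgreeOn H φ) {σ : List S → S}
    (hσ : G.IsReachStrategy σ) :
    ∃ τ, H.IsReachStrategy τ ∧ ∀ (ω : List S), ∀ s ∈ φ, τ (ω ++ [s]) = σ (ω ++ [s]) :=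
  Game.exists_isReachStrategy_eq_on σ fun ω s hsφ hs htrap =>
    (h.reach_iff s hsφ _).1 <|
      hσ ω s ((h.isReach_iff s hsφ).2 hs) fun ht => htrap ((h.trap_iff hsφ).1 ht)

theorem consistentR_mapPlay (h : G.AgreeOn H φ) {σ τ : List S → S}
    (hστ : ∀ (ω : List S), ∀ s ∈ φ, τ (ω ++ [s]) = σ (ω ++ [s])) {p : G.Play}
    (hp : ∀ k : ℕ, (k : ℕ∞) ≤ p.len → p.seq k ∈ φ) (hcons : G.ConsistentR σ p) :
    H.ConsistentR τ (h.mapPlay p hp) := by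
  intro i hi hr
  have hmem := hp i hi.le
  calc p.seq (i + 1)
      = σ (listPrefix p.seq (i + 1)) := hcons i hi ((h.isReach_iff _ hmem).2 hr)
    _ = τ (listPrefix p.seq (i + 1)) := by rw [listPrefix_succ, hστ _ _ hmem]

theorem reachWinsPlay_mapPlay_iff (h : G.AgreeOn H φ) {p : G.Play}
    (hp : ∀ k : ℕ, (k : ℕ∞) ≤ p.len → p.seq k ∈ φ) :
    H.ReachWinsPlay (h.mapPlay p hp) ↔ G.ReachWinsPlay p :=
  exists_congr fun k => and_congr_right fun hk => (h.mem_goal_iff _ (hp k hk)).symm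

theorem reachWinsFrom (h : G.AgreeOn H φ) (hφ : G.IsPerfectPartition φ) (hs : s ∈ φ)
    (hwins : G.ReachWinsFrom s) : H.ReachWinsFrom s := by
  obtain ⟨σ, hσ, hwin⟩ := hwins
  obtain ⟨τ, hτ, hτσ⟩ := h.exists_isReachStrategy_eq_on hσ
  refine ⟨τ, hτ, fun p hp0 hcons => ?_⟩
  by_contra hlose
  have hmem := (h.isPerfectPartition_iff.1 hφ).seq_mem (hp0 ▸ hs) hlose
  have hcons' := h.symm.consistentR_mapPlay (fun ω s hs => (hτσ ω s hs).symm) hmem hcons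
  exact hlose ((h.symm.reachWinsPlay_mapPlay_iff hmem).1 (hwin _ hp0 hcons'))

theorem reachWinsFrom_iff (h : G.AgreeOn H φ) (hφ : G.IsPerfectPartition φ) (hs : s ∈ φ) :
    G.ReachWinsFrom s ↔ H.ReachWinsFrom s :=
  ⟨h.reachWinsFrom hφ hs, h.symm.reachWinsFrom (h.isPerfectPartition_iff.1 hφ) hs⟩

end AgreeOn

theorem agreeOn_postGame (G : Game S) (φ : Set S) : G.AgreeOn (G.postGame φ) φ where
  isReach_iff _ _ := Iff.rfl
  safe_iff _ hs _ := (and_iff_left hs).symm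
  reach_iff _ hs _ := (and_iff_left hs).symm
  mem_goal_iff _ _ := Iff.rfl

end Game

theorem reach_wins_postGame_iff_of_perfect_partition_general {S : Type u} (G : Game S)
    (φ : Set S) (hperf : G.IsPerfectPartition φ) :
    ∀ s ∈ φ, ((G.postGame φ).ReachWinsFrom s ↔ G.ReachWinsFrom s) :=
  fun _ hs => ((G.agreeOn_postGame φ).reachWinsFrom_iff hperf hs).symm

/-- if `φ` perfectly partitions `G` and contains `Goal`, then
for states behind the subgoal `Instantiate(φ, G)`, winning in the post-game
and winning in `G` coincide for REACH. -/
theorem reach_wins_postGame_iff_of_perfect_partition {S : Type u} (G : Game S)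
    (φ : Set S) (hGoal : G.Goal ⊆ φ)
    (hperf : ∀ s s', G.E s s' → s ∈ φ → s' ∉ φ → s ∈ G.Goal) :
    ∀ s ∈ Game.Post (fun a b => G.E a b ∧ a ∉ φ ∧ b ∈ φ),
      ((G.postGame φ).ReachWinsFrom s ↔ G.ReachWinsFrom s) := by
  rintro s ⟨-, -, -, hs⟩
  exact reach_wins_postGame_iff_of_perfect_partition_general G φ hperf s hs
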